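/- Let u, v ∈ (ℚ \ ℤ)² with u ≢ ±v (mod ℤ²). Then for all τ in the upper half-plane, (f_u(τ) − f_v(τ))⁶ = j(τ)²(j(τ)−1728)³ / (2³⁰·3²⁴) · g_{u+v}(τ)⁶ g_{u−v}(τ)⁶ / (g_u(τ)¹² g_v(τ)¹²). -/

import Mathlib

noncomputable section

open Complex

/-- `e(z) = exp(2πiz)`. -/
def ec (z : ℂ) : ℂ := Complex.exp (2 * Real.pi * Complex.I * z)

/-- The Weierstrass ℘-function of the lattice `ℤτ + ℤ`. -/
def wp (τ z : ℂ) : ℂ :=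
  z⁻¹ ^ 2 + ∑' p : ℤ × ℤ,
    if p = 0 then 0
    else ((z - ((p.1 : ℂ) * τ + (p.2 : ℂ)))⁻¹ ^ 2 - ((p.1 : ℂ) * τ + (p.2 : ℂ))⁻¹ ^ 2)

/-- The lattice invariant `g₂` of `ℤτ + ℤ`. -/
def g2 (τ : ℂ) : ℂ := 60 * ∑' p : ℤ × ℤ, if p = 0 then 0 else ((p.1 : ℂ) * τ + (p.2 : ℂ))⁻¹ ^ 4

/-- The lattice invariant `g₃` of `ℤτ + ℤ`. -/
def g3 (τ : ℂ) : ℂ := 140 * ∑' p : ℤ × ℤ, if p = 0 then 0 else ((p.1 : ℂ) * τ + (p.2 : ℂ))⁻¹ ^ 6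

/-- The discriminant `Δ = g₂³ − 27 g₃²`. -/
def disc (τ : ℂ) : ℂ := g2 τ ^ 3 - 27 * g3 τ ^ 2

/-- The modular `j`-invariant `j = 1728 g₂³/Δ`. -/
def jInv (τ : ℂ) : ℂ := 1728 * g2 τ ^ 3 / disc τ

/-- The (first) Fricke function `f_v(τ) = (g₂g₃/Δ)·℘(r₁τ + r₂)`. -/
def fricke (v : ℚ × ℚ) (τ : ℂ) : ℂ :=
  g2 τ * g3 τ / disc τ * wp τ ((v.1 : ℂ) * τ + (v.2 : ℂ))

/-- `q^r = exp(2πirτ)` for rational exponents `r`. -/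
def qpow (τ : ℂ) (r : ℚ) : ℂ := Complex.exp (2 * Real.pi * Complex.I * (r : ℂ) * τ)

/-- The Siegel function `g_v(τ)`. -/
def siegel (v : ℚ × ℚ) (τ : ℂ) : ℂ :=
  -Complex.exp (Real.pi * Complex.I * (v.2 : ℂ) * ((v.1 : ℂ) - 1)) *
    qpow τ ((1/2) * (v.1 ^ 2 - v.1 + 1/6)) *
    (1 - qpow τ v.1 * ec (v.2 : ℂ)) *
    ∏' n : ℕ,
      ((1 - qpow τ ((n : ℚ) + 1 + v.1) * ec (v.2 : ℂ)) *
       (1 - qpow τ ((n : ℚ) + 1 - v.1) * ec (-(v.2 : ℂ))))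

/-- A rational number is integral if it is (the image of) an integer. -/
def IsIntegralRat (r : ℚ) : Prop := ∃ n : ℤ, r = n

/-- `u ≡ v (mod ℤ²)`. -/
def CongModZ2 (u v : ℚ × ℚ) : Prop := IsIntegralRat (u.1 - v.1) ∧ IsIntegralRat (u.2 - v.2)


lemma fs_zeta_six : riemannZeta 6 = (Real.pi : ℂ) ^ 6 / 945 := by
  have h6 : bernoulli' 6 = 1 / 42 := by
    have h5 : bernoulli' 5 = 0 := bernoulli'_eq_zero_of_odd (by decide) (by norm_num)
    rw [bernoulli'_def]
    norm_num [Finset.sum_range_succ, h5, Nat.choose]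
  have h := riemannZeta_two_mul_nat (k := 3) (by norm_num)
  rw [bernoulli_eq_bernoulli'_of_ne_one (by norm_num), show 2 * 3 = 6 by norm_num, h6] at h
  have e : (2 * ((3 : ℕ) : ℂ)) = 6 := by norm_num
  rw [e] at h
  rw [h]
  norm_num [Nat.factorial]
  ring

lemma fs_tsum_eq (k : ℕ) (hk : 3 ≤ k) (τ : UpperHalfPlane) :
    (∑' p : ℤ × ℤ, if p = 0 then 0 else ((p.1 : ℂ) * (τ : ℂ) + (p.2 : ℂ))⁻¹ ^ k)
      = 2 * riemannZeta k * ModularForm.E hk τ := by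
  have HE2 := tsum_eisSummand_eq_riemannZeta_mul_eisensteinSeries hk τ
  have hE : ModularForm.E hk τ = (1 / 2 : ℂ) • EisensteinSeries.eisensteinSeriesSIF (N := 1) 0 k τ := rfl
  rw [EisensteinSeries.eisensteinSeriesSIF_apply 0 k τ] at hE
  rw [hE, smul_eq_mul]
  trans ∑' v : Fin 2 → ℤ, EisensteinSeries.eisSummand k v τ
  · rw [← (finTwoArrowEquiv ℤ).symm.tsum_eq]
    refine tsum_congr fun p => ?_
    split_ifs with h
    · subst h
      simp [EisensteinSeries.eisSummand, finTwoArrowEquiv]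
      exact (zero_pow (by omega)).symm
    · simp [EisensteinSeries.eisSummand, finTwoArrowEquiv]
  · rw [HE2]; ring

lemma fs_disc (τ : ℂ) (h : 0 < τ.im) :
    disc τ = (2 * Real.pi) ^ 12 * ModularForm.eta τ ^ 24 := by
  have h4 := fs_tsum_eq 4 (by norm_num) ⟨τ, h⟩
  have h6 := fs_tsum_eq 6 (by norm_num) ⟨τ, h⟩
  have hd := ModularForm.discriminant_eq_E₄_cube_sub_E₆_sq ⟨τ, h⟩
  simp only [ModularForm.discriminant] at hd h4 h6
  rw [disc, g2, g3, h4, h6, hd]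
  push_cast
  rw [fs_zeta_six, riemannZeta_four]
  ring

def fsL (τ : ℂ) (h : 0 < τ.im) : PeriodPair where
  ω₁ := τ
  ω₂ := 1
  indep := by
    rw [LinearIndependent.pair_iff]
    intro s t hst
    have h1 := congrArg Complex.im hst
    simp at h1
    have hs : s = 0 := by
      rcases h1 with h1 | h1
      · exact h1
      · exact absurd h1 h.ne'
    subst hs
    simpa using hst

lemma fs_wp (τ : ℂ) (h : 0 < τ.im) (z : ℂ) : wp τ z = (fsL τ h).weierstrassP z := by
  rw [← (fsL τ h).weierstrassPExcept_add 0 z, wp, PeriodPair.weierstrassPExcept,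
    ← (fsL τ h).latticeEquivProd.symm.toEquiv.tsum_eq]
  rw [add_comm]
  congr 1
  · refine tsum_congr fun p => ?_
    have e : (((fsL τ h).latticeEquivProd.symm.toEquiv p : (fsL τ h).lattice) : ℂ) = p.1 * τ + p.2 := by
      have := (fsL τ h).latticeEquiv_symm_apply p
      rw [show ((fsL τ h).latticeEquivProd.symm.toEquiv p) = (fsL τ h).latticeEquivProd.symm p from rfl, this]
      simp [fsL]
    have e0 : ((((fsL τ h).latticeEquivProd.symm.toEquiv p : (fsL τ h).lattice) : ℂ) = ((0 : (fsL τ h).lattice) : ℂ)) ↔ p = 0 := by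
      rw [Subtype.coe_inj]
      simp
    simp only [e0]
    split_ifs with hp
    · rfl
    · rw [e]; simp
  · simp

def fsT (q X : ℂ) : ℂ := ∏' n : ℕ, (1 - q ^ n * X)

lemma fsT_summable {q : ℂ} (hq : ‖q‖ < 1) (X : ℂ) : Summable fun n : ℕ => ‖-(q ^ n * X)‖ := by
  simp only [norm_neg, norm_mul, norm_pow]
  exact (summable_geometric_of_lt_one (norm_nonneg _) hq).mul_right _

lemma fsT_multipliable {q : ℂ} (hq : ‖q‖ < 1) (X : ℂ) :
    Multipliable fun n : ℕ => (1 - q ^ n * X) := by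
  simpa [sub_eq_add_neg] using multipliable_one_add_of_summable (fsT_summable hq X)

lemma fsT_ne_zero {q : ℂ} (hq : ‖q‖ < 1) (X : ℂ) (h : ∀ n : ℕ, q ^ n * X ≠ 1) : fsT q X ≠ 0 := by
  have := tprod_one_add_ne_zero_of_summable (f := fun n : ℕ => -(q ^ n * X))
    (fun i => by rw [← sub_eq_add_neg]; exact sub_ne_zero.mpr (h i).symm) (fsT_summable hq X)
  simpa [fsT, sub_eq_add_neg] using this

lemma fsT_succ {q : ℂ} (hq : ‖q‖ < 1) (X : ℂ) : fsT q X = (1 - X) * fsT q (q * X) := by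
  have h := fsT_multipliable hq (q * X)
  have e : (fun n : ℕ => (1 - q ^ n * (q * X))) = fun n : ℕ => (1 - q ^ (n + 1) * X) := by
    funext n
    rw [pow_succ, mul_assoc]
  have e0 : fsT q (q * X) = ∏' n : ℕ, (1 - q ^ (n + 1) * X) := by
    unfold fsT
    rw [e]
  rw [e] at h
  rw [e0]
  unfold fsT
  rw [tprod_eq_zero_mul' (f := fun n : ℕ => 1 - q ^ n * X) h, pow_zero, one_mul]

lemma fsT_differentiable {q : ℂ} (hq : ‖q‖ < 1) : Differentiable ℂ (fsT q) := by
  intro X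
  have hK : IsOpen (Metric.ball (0 : ℂ) (‖X‖ + 1)) := Metric.isOpen_ball
  have H := Summable.hasProdLocallyUniformlyOn_nat_one_add (f := fun (n : ℕ) (x : ℂ) => -(q ^ n * x))
    (u := fun n => ‖q‖ ^ n * (‖X‖ + 1)) hK
    ((summable_geometric_of_lt_one (norm_nonneg _) hq).mul_right _)
    (.of_forall fun n x hx => by
      have hx' : ‖x‖ ≤ ‖X‖ + 1 := by simpa using (Metric.mem_ball.mp hx).le
      simp only [norm_neg, norm_mul, norm_pow]
      gcongr) (fun n => by fun_prop)
  have H2 : DifferentiableOn ℂ (fun x => ∏' i : ℕ, (1 + -(q ^ i * x)))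
      (Metric.ball (0 : ℂ) (‖X‖ + 1)) := by
    refine H.differentiableOn (.of_forall fun s ↦ ?_) hK
    have : DifferentiableOn ℂ (fun x => ∏ i ∈ s, (1 + -(q ^ i * x)))
        (Metric.ball (0 : ℂ) (‖X‖ + 1)) := DifferentiableOn.fun_finsetProd (fun _ _ ↦ by fun_prop)
    simpa [Finset.prod_fn] using this
  have H3 := H2.differentiableAt (hK.mem_nhds (x := X) (by simp))
  have e : fsT q = fun x => ∏' i : ℕ, (1 + -(q ^ i * x)) := by
    funext x
    simp only [fsT, sub_eq_add_neg]
  rw [e]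
  exact H3

lemma ec_add (z w : ℂ) : ec (z + w) = ec z * ec w := by
  simp only [ec, mul_add, Complex.exp_add]

lemma ec_neg (z : ℂ) : ec (-z) = (ec z)⁻¹ := by
  simp only [ec, mul_neg, Complex.exp_neg]

lemma ec_ne_zero (z : ℂ) : ec z ≠ 0 := Complex.exp_ne_zero _

lemma ec_zero : ec 0 = 1 := by simp [ec]

lemma ec_natmul (n : ℕ) (z : ℂ) : ec z ^ n = ec (n * z) := by
  simp only [ec, ← Complex.exp_nat_mul]
  congr 1; ring

lemma ec_one : ec 1 = 1 := by simp [ec]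

lemma ec_eq_one {z : ℂ} : ec z = 1 ↔ ∃ n : ℤ, z = n := by
  rw [ec, Complex.exp_eq_one_iff]
  refine exists_congr fun n => ?_
  have := Complex.two_pi_I_ne_zero
  constructor
  · intro h
    apply mul_left_cancel₀ this
    linear_combination h
  · rintro rfl; ring

lemma ec_differentiable : Differentiable ℂ ec := by
  unfold ec; fun_prop

lemma ec_norm {τ : ℂ} (h : 0 < τ.im) : ‖ec τ‖ < 1 :=
  UpperHalfPlane.norm_exp_two_pi_I_lt_one ⟨τ, h⟩

def fsP (τ z : ℂ) : ℂ := fsT (ec τ) (ec z) * fsT (ec τ) (ec (τ - z))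

lemma fsP_differentiable {τ : ℂ} (h : 0 < τ.im) : Differentiable ℂ (fsP τ) := by
  have := fsT_differentiable (ec_norm h)
  have := ec_differentiable
  unfold fsP
  fun_prop

lemma fsP_neg_eq (τ z : ℂ) : fsP τ (-z) = fsP τ (z + τ) := by
  simp only [fsP]
  rw [mul_comm]
  congr 2 <;> ring_nf

lemma fsP_neg {τ : ℂ} (h : 0 < τ.im) (z : ℂ) : fsP τ (-z) = - ec (-z) * fsP τ z := by
  have hq := ec_norm h
  simp only [fsP]
  rw [fsT_succ hq (ec (-z)), fsT_succ hq (ec z)]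
  rw [← ec_add, ← ec_add, sub_neg_eq_add, ← sub_eq_add_neg]
  have e := ec_neg z
  have e2 := mul_inv_cancel₀ (ec_ne_zero z)
  rw [← e] at e2
  linear_combination (- fsT (ec τ) (ec (τ + z)) * fsT (ec τ) (ec (τ - z))) * e2

lemma fsP_add_tau {τ : ℂ} (h : 0 < τ.im) (z : ℂ) : fsP τ (z + τ) = - ec (-z) * fsP τ z := by
  rw [← fsP_neg_eq, fsP_neg h]

lemma fsP_add_one (τ z : ℂ) : fsP τ (z + 1) = fsP τ z := by
  have : ec (-1) = 1 := by rw [ec_neg, ec_one, inv_one]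
  simp only [fsP]
  rw [ec_add, ec_one, mul_one, show τ - (z + 1) = (τ - z) + (-1) by ring, ec_add, this, mul_one]

lemma fsP_ne_zero {τ : ℂ} (h : 0 < τ.im) {z : ℂ} (hz : z ∉ (fsL τ h).lattice) : fsP τ z ≠ 0 := by
  have hq := ec_norm h
  rw [PeriodPair.mem_lattice] at hz
  refine mul_ne_zero (fsT_ne_zero hq _ fun n hn => hz ?_) (fsT_ne_zero hq _ fun n hn => hz ?_)
  · rw [ec_natmul, ← ec_add, ec_eq_one] at hn
    obtain ⟨m, hm⟩ := hn
    refine ⟨-n, m, ?_⟩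
    simp only [fsL]
    push_cast
    linear_combination -hm
  · rw [ec_natmul, ← ec_add, ec_eq_one] at hn
    obtain ⟨m, hm⟩ := hn
    refine ⟨n + 1, -m, ?_⟩
    simp only [fsL]
    push_cast
    linear_combination hm

lemma fsT_self_ne_zero {τ : ℂ} (h : 0 < τ.im) : fsT (ec τ) (ec τ) ≠ 0 := by
  refine fsT_ne_zero (ec_norm h) _ fun n hn => ?_
  have := ec_norm h
  rw [← pow_succ] at hn
  have h2 : ‖ec τ‖ ^ (n + 1) < 1 := pow_lt_one₀ (norm_nonneg _) this (by simp)
  rw [← norm_pow, hn] at h2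
  simp at h2

lemma fsP_zero {τ : ℂ} (h : 0 < τ.im) : fsP τ 0 = 0 := by
  rw [fsP, fsT_succ (ec_norm h), ec_zero]; simp

lemma fsP_deriv {τ : ℂ} (h : 0 < τ.im) :
    deriv (fsP τ) 0 = -(2 * Real.pi * Complex.I) * fsT (ec τ) (ec τ) ^ 2 := by
  have hq := ec_norm h
  have e : fsP τ = fun z => (1 - ec z) * (fsT (ec τ) (ec τ * ec z) * fsT (ec τ) (ec (τ - z))) := by
    funext z
    rw [fsP, fsT_succ hq]; ring
  have h1 : HasDerivAt (fun z => 1 - ec z) (-(2 * Real.pi * Complex.I)) 0 := by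
    have : HasDerivAt ec (ec 0 * (2 * Real.pi * Complex.I)) 0 := by
      have := ((hasDerivAt_id (0 : ℂ)).const_mul (2 * Real.pi * Complex.I)).cexp
      rw [show ec = fun z => Complex.exp (2 * Real.pi * Complex.I * z) from rfl]
      simpa using this
    rw [ec_zero, one_mul] at this
    simpa using this.const_sub 1
  have h2 : DifferentiableAt ℂ (fun z => fsT (ec τ) (ec τ * ec z) * fsT (ec τ) (ec (τ - z))) 0 := by
    have := fsT_differentiable hq
    have := ec_differentiable
    fun_prop
  rw [e]
  refine (h1.mul h2.hasDerivAt).deriv.trans ?_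
  simp [ec_zero]
  ring

def fsF (τ w z : ℂ) : ℂ := fsP τ (z + w) * fsP τ (z - w) / fsP τ z ^ 2

lemma fsF_add_tau {τ : ℂ} (h : 0 < τ.im) (w : ℂ) : Function.Periodic (fsF τ w) τ := by
  intro z
  have h1 := fsP_add_tau h (z + w)
  have h2 := fsP_add_tau h (z - w)
  have h3 := fsP_add_tau h z
  simp only [fsF]
  rw [show z + τ + w = z + w + τ by ring, show z + τ - w = z - w + τ by ring, h1, h2, h3]
  have e : ec (-(z + w)) * ec (-(z - w)) = ec (-z) ^ 2 := by
    rw [sq, ← ec_add, ← ec_add]; congr 1; ring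
  have : ec (-z) ^ 2 ≠ 0 := pow_ne_zero _ (ec_ne_zero _)
  rw [show -ec (-(z + w)) * fsP τ (z + w) * (-ec (-(z - w)) * fsP τ (z - w))
    = ec (-z) ^ 2 * (fsP τ (z + w) * fsP τ (z - w)) by rw [← e]; ring,
    show (-ec (-z) * fsP τ z) ^ 2 = ec (-z) ^ 2 * fsP τ z ^ 2 by ring, mul_div_mul_left _ _ this]

lemma fsF_add_one (τ w : ℂ) : Function.Periodic (fsF τ w) 1 := by
  intro z
  simp only [fsF]
  rw [show z + 1 + w = z + w + 1 by ring, show z + 1 - w = z - w + 1 by ring, fsP_add_one,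
    fsP_add_one, fsP_add_one]

lemma fsF_add_coe {τ : ℂ} (h : 0 < τ.im) (w z : ℂ) {l : ℂ} (hl : l ∈ (fsL τ h).lattice) :
    fsF τ w (z + l) = fsF τ w z := by
  obtain ⟨m, n, rfl⟩ := PeriodPair.mem_lattice.mp hl
  have h1 := (fsF_add_tau h w).int_mul m z
  have h2 := (fsF_add_one τ w).int_mul n (z + m * τ)
  simp only [fsL]
  rw [← add_assoc, h2, h1]

lemma fsF_neg {τ : ℂ} (h : 0 < τ.im) (w z : ℂ) : fsF τ w (-z) = fsF τ w z := by
  have h1 := fsP_neg h (z + w)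
  have h2 := fsP_neg h (z - w)
  have h3 := fsP_neg h z
  simp only [fsF]
  rw [show -z + w = -(z - w) by ring, show -z - w = -(z + w) by ring, h1, h2, h3]
  have e : ec (-(z + w)) * ec (-(z - w)) = ec (-z) ^ 2 := by
    rw [sq, ← ec_add, ← ec_add]; congr 1; ring
  have : ec (-z) ^ 2 ≠ 0 := pow_ne_zero _ (ec_ne_zero _)
  rw [show (-ec (-(z - w)) * fsP τ (z - w)) * (-ec (-(z + w)) * fsP τ (z + w))
    = ec (-z) ^ 2 * (fsP τ (z + w) * fsP τ (z - w)) by rw [← e]; ring,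
    show (-ec (-z) * fsP τ z) ^ 2 = ec (-z) ^ 2 * fsP τ z ^ 2 by ring, mul_div_mul_left _ _ this]

/-- An even-type removal: an analytic function vanishing at `0`, equal to `z² D z` off `0`
with `D` even, yields an analytic extension of `D`. -/
lemma fs_remove (A D : ℂ → ℂ) (hA : AnalyticAt ℂ A 0) (hA0 : A 0 = 0)
    (hD : ∀ z, D (-z) = D z)
    (hAD : ∀ᶠ z in nhdsWithin 0 {0}ᶜ, A z = z ^ 2 * D z) :
    ∃ B : ℂ → ℂ, AnalyticAt ℂ B 0 ∧ ∀ᶠ z in nhdsWithin 0 {0}ᶜ, D z = B z := by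
  rw [eventually_nhdsWithin_iff] at hAD
  have hneg : Filter.Tendsto (fun z : ℂ => -z) (nhds 0) (nhds 0) := by
    simpa using (continuous_neg (G := ℂ)).tendsto 0
  have heven : (fun z => A (-z)) =ᶠ[nhds 0] A := by
    filter_upwards [hAD, hneg.eventually hAD] with z h1 h2
    by_cases hz : z = 0
    · simp [hz]
    · rw [h1 hz, h2 (by simpa using hz), hD]; ring
  have hd : deriv A 0 = 0 := by
    have h1 := heven.deriv_eq
    rw [deriv_comp_neg, neg_zero] at h1
    have : (2 : ℂ) * deriv A 0 = 0 := by linear_combination -h1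
    simpa using this
  have hA1 : AnalyticAt ℂ (dslope A 0) 0 := by
    obtain ⟨p, hp⟩ := hA
    exact ⟨_, hp.has_fpower_series_dslope_fslope⟩
  have hA2 : AnalyticAt ℂ (dslope (dslope A 0) 0) 0 := by
    obtain ⟨p, hp⟩ := hA1
    exact ⟨_, hp.has_fpower_series_dslope_fslope⟩
  refine ⟨_, hA2, ?_⟩
  rw [eventually_nhdsWithin_iff]
  filter_upwards [hAD] with z h1 hz
  have hz' : z ≠ 0 := hz
  rw [dslope_of_ne _ hz', slope_def_field, dslope_same, hd, dslope_of_ne _ hz', slope_def_field,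
    h1 hz, hA0]
  field_simp
  ring

lemma fs_key {τ : ℂ} (h : 0 < τ.im) {z w : ℂ} (hz : z ∉ (fsL τ h).lattice)
    (hw : w ∉ (fsL τ h).lattice) :
    fsF τ w z = fsP τ w * fsP τ (-w) / deriv (fsP τ) 0 ^ 2 *
      ((fsL τ h).weierstrassP z - (fsL τ h).weierstrassP w) := by
  classical
  set L := fsL τ h with hL
  set c := fsP τ w * fsP τ (-w) / deriv (fsP τ) 0 ^ 2 with hc
  have hd : deriv (fsP τ) 0 ≠ 0 := by
    rw [fsP_deriv h]
    exact mul_ne_zero (neg_ne_zero.mpr Complex.two_pi_I_ne_zero)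
      (pow_ne_zero _ (fsT_self_ne_zero h))
  let D : ℂ → ℂ := fun z => fsF τ w z - c * (L.weierstrassP z - L.weierstrassP w)
  have hDper : ∀ z, ∀ l ∈ L.lattice, D (z + l) = D z := by
    intro z l hl
    simp only [D]
    rw [fsF_add_coe h w z hl, L.weierstrassP_add_coe z ⟨l, hl⟩]
  have hDan : ∀ z, z ∉ L.lattice → DifferentiableAt ℂ D z := by
    intro z hz
    have h1 := fsP_differentiable h
    have h2 := fsP_ne_zero h hz
    have h3 : DifferentiableAt ℂ L.weierstrassP z :=
      L.differentiableOn_weierstrassP.differentiableAt (L.isClosed_lattice.isOpen_compl.mem_nhds hz)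
    have h4 : DifferentiableAt ℂ (fsF τ w) z := by
      unfold fsF
      exact DifferentiableAt.div (by fun_prop) (by fun_prop) (pow_ne_zero _ h2)
    exact h4.sub ((h3.sub_const _).const_mul c)
  have hPa : ∀ z, AnalyticAt ℂ (fsP τ) z := fun z => (fsP_differentiable h).analyticAt z
  have hS : AnalyticAt ℂ (dslope (fsP τ) 0) 0 := by
    obtain ⟨p, hp⟩ := hPa 0
    exact ⟨_, hp.has_fpower_series_dslope_fslope⟩
  obtain ⟨B, hB, hDB⟩ := fs_remove
    (fun z => fsP τ (z + w) * fsP τ (z - w) / dslope (fsP τ) 0 z ^ 2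
      - c * (z ^ 2 * L.weierstrassPExcept 0 z + 1 - z ^ 2 * L.weierstrassP w)) D
    (by
      have h1 : AnalyticAt ℂ (fun z => fsP τ (z + w)) 0 :=
        (show Differentiable ℂ (fun z => fsP τ (z + w)) by
          have := fsP_differentiable h
          fun_prop).analyticAt 0
      have h2 : AnalyticAt ℂ (fun z => fsP τ (z - w)) 0 :=
        (show Differentiable ℂ (fun z => fsP τ (z - w)) by
          have := fsP_differentiable h
          fun_prop).analyticAt 0
      have h3 := L.analyticAt_weierstrassPExcept 0
      have h4 : dslope (fsP τ) 0 0 ^ 2 ≠ 0 := by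
        rw [dslope_same]; exact pow_ne_zero _ hd
      have h5 : AnalyticAt ℂ (fun z : ℂ => z ^ 2) 0 := by fun_prop
      exact ((h1.mul h2).div (hS.pow 2) h4).sub
        (analyticAt_const.mul (((h5.mul h3).add analyticAt_const).sub (h5.mul analyticAt_const))))
    (by
      simp [dslope_same, hc])
    (by
      intro z
      simp only [D]
      rw [fsF_neg h, L.weierstrassP_neg])
    (by
      rw [eventually_nhdsWithin_iff]
      refine .of_forall fun z hz => ?_
      have hz' : z ≠ 0 := hz
      have e1 := L.weierstrassPExcept_add 0 z
      simp only [D, fsF]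
      rw [dslope_of_ne _ hz', slope_def_field, fsP_zero h, ← e1]
      simp only [ZeroMemClass.coe_zero, sub_zero]
      field_simp
      ring)
  let Dt : ℂ → ℂ := fun z => if z ∈ L.lattice then B 0 else D z
  have hDtper : ∀ z, ∀ l ∈ L.lattice, Dt (z + l) = Dt z := by
    intro z l hl
    have : z + l ∈ L.lattice ↔ z ∈ L.lattice := by
      simpa using (L.lattice.toAddSubgroup.add_mem_cancel_right (y := z) hl)
    simp only [Dt, this, hDper z l hl]
  have hDt0 : DifferentiableAt ℂ Dt 0 := by
    refine hB.differentiableAt.congr_of_eventuallyEq ?_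
    rw [eventually_nhdsWithin_iff] at hDB
    filter_upwards [hDB, L.compl_lattice_sdiff_singleton_mem_nhds 0] with z h1 h2
    by_cases hz : z = 0
    · simp [Dt, hz]
    · have : z ∉ L.lattice := fun hh => h2 ⟨hh, hz⟩
      simp only [Dt, this, if_false]
      exact h1 hz
  have hDt : Differentiable ℂ Dt := by
    intro x
    by_cases hx : x ∈ L.lattice
    · have e : Dt = fun y => Dt (y - x) := by
        funext y
        rw [sub_eq_add_neg, hDtper y (-x) (neg_mem hx)]
      rw [e]
      have h0 : DifferentiableAt ℂ Dt (x - x) := by rw [sub_self]; exact hDt0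
      exact h0.comp x (f := fun y => y - x) (by fun_prop)
    · refine (hDan x hx).congr_of_eventuallyEq ?_
      filter_upwards [L.isClosed_lattice.isOpen_compl.mem_nhds hx] with y hy
      have : y ∉ L.lattice := hy
      simp [Dt, this]
  have hconst := hDt.apply_eq_apply_of_bounded (IsZLattice.isCompact_range_of_periodic L.lattice _
    hDt.continuous fun z w hw ↦ hDtper z w hw).isBounded z w
  simp only [Dt, hz, hw, if_false, D, sub_self, mul_zero, sub_zero] at hconst
  have hFw : fsF τ w w = 0 := by
    simp [fsF, fsP_zero h]
  rw [hFw, sub_eq_zero] at hconst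
  exact hconst

def fsK (v : ℚ × ℚ) (τ : ℂ) : ℂ :=
  -Complex.exp (Real.pi * Complex.I * (v.2 : ℂ) * ((v.1 : ℂ) - 1)) *
    qpow τ ((1/2) * (v.1 ^ 2 - v.1 + 1/6))

lemma fsK_ne_zero (v : ℚ × ℚ) (τ : ℂ) : fsK v τ ≠ 0 :=
  mul_ne_zero (neg_ne_zero.mpr (Complex.exp_ne_zero _)) (Complex.exp_ne_zero _)

lemma fs_siegel {τ : ℂ} (h : 0 < τ.im) (v : ℚ × ℚ) :
    siegel v τ = fsK v τ * fsP τ ((v.1 : ℂ) * τ + (v.2 : ℂ)) := by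
  have hq := ec_norm h
  have e1 : qpow τ v.1 * ec (v.2 : ℂ) = ec ((v.1 : ℂ) * τ + (v.2 : ℂ)) := by
    rw [ec_add]
    simp only [qpow, ec]
    congr 2
    ring
  have e2 : ∀ n : ℕ, qpow τ ((n : ℚ) + 1 + v.1) * ec (v.2 : ℂ)
      = ec τ ^ n * (ec τ * ec ((v.1 : ℂ) * τ + (v.2 : ℂ))) := by
    intro n
    rw [ec_natmul, ← ec_add, ← ec_add]
    simp only [qpow, ec, ← Complex.exp_add]
    push_cast
    congr 1
    ring
  have e3 : ∀ n : ℕ, qpow τ ((n : ℚ) + 1 - v.1) * ec (-(v.2 : ℂ))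
      = ec τ ^ n * (ec (τ - ((v.1 : ℂ) * τ + (v.2 : ℂ)))) := by
    intro n
    rw [ec_natmul, ← ec_add]
    simp only [qpow, ec, ← Complex.exp_add]
    push_cast
    congr 1
    ring
  rw [siegel, fsP, fsT_succ hq (ec ((v.1 : ℂ) * τ + (v.2 : ℂ)))]
  simp only [e1, e2, e3]
  rw [(fsT_multipliable hq _).tprod_mul (fsT_multipliable hq _), fsK]
  simp only [fsT]
  ring

lemma fs_eta (τ : ℂ) : ModularForm.eta τ ^ 24 = ec τ * fsT (ec τ) (ec τ) ^ 24 := by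
  have e1 : Function.Periodic.qParam 24 τ ^ 24 = ec τ := by
    rw [Function.Periodic.qParam, ← Complex.exp_nat_mul, ec]
    congr 1
    push_cast
    ring
  have e2 : (∏' n, (1 - ModularForm.eta_q n τ)) = fsT (ec τ) (ec τ) := by
    unfold fsT
    refine tprod_congr fun n => ?_
    rw [ModularForm.eta_q_eq_pow, pow_succ]
    rfl
  rw [ModularForm.eta, mul_pow, e1, e2]

lemma fsK_rel (u v : ℚ × ℚ) (τ : ℂ) :
    fsK (u + v) τ ^ 6 * fsK (u - v) τ ^ 6 * ec τ =
      fsK u τ ^ 12 * fsK v τ ^ 12 * ec ((v.1 : ℂ) * τ + (v.2 : ℂ)) ^ 6 := by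
  simp only [fsK, qpow, ec, mul_pow, Even.neg_pow (show Even 6 by decide),
    Even.neg_pow (show Even 12 by decide), ← Complex.exp_nat_mul, ← Complex.exp_add,
    Prod.fst_add, Prod.snd_add, Prod.fst_sub, Prod.snd_sub]
  congr 1
  push_cast
  ring

lemma fs_notMem {τ : ℂ} (h : 0 < τ.im) (v : ℚ × ℚ) (hv : ¬IsIntegralRat v.1) :
    (v.1 : ℂ) * τ + (v.2 : ℂ) ∉ (fsL τ h).lattice := by
  intro hm
  have := (PeriodPair.mul_ω₁_add_mul_ω₂_mem_lattice (L := fsL τ h) (α := v.1) (β := v.2)).mp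
    (by simpa [fsL] using hm)
  exact hv ⟨v.1.num, ((Rat.den_eq_one_iff _).mp this.1).symm⟩

lemma fs_final (a b d X Ku Kv Ka Ks Pu Pv Pa Ps T e q p : ℂ) (hd : d ≠ 0) (hq : q ≠ 0)
    (hKu : Ku ≠ 0) (hKv : Kv ≠ 0) (hPu : Pu ≠ 0) (hPv : Pv ≠ 0)
    (hdd : d = p * (q * T)) (hK : Ka ^ 6 * Ks ^ 6 * q = Ku ^ 12 * Kv ^ 12 * e ^ 6)
    (hX : X ^ 6 * (Pv ^ 12 * Pu ^ 12) = p * T * e ^ 6 * (Pa ^ 6 * Ps ^ 6)) :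
    (a * b / d * X) ^ 6 =
      (1728 * a ^ 3 / d) ^ 2 * (1728 * 27 * b ^ 2 / d) ^ 3 / (2 ^ 30 * 3 ^ 24) *
        ((Ka * Pa) ^ 6 * (Ks * Ps) ^ 6) / ((Ku * Pu) ^ 12 * (Kv * Pv) ^ 12) := by
  have hC : (1728 * a ^ 3 / d) ^ 2 * (1728 * 27 * b ^ 2 / d) ^ 3 / (2 ^ 30 * 3 ^ 24)
      = (a * b / d) ^ 6 * d := by
    field_simp
    ring
  rw [hC, eq_div_iff (mul_ne_zero (pow_ne_zero _ (mul_ne_zero hKu hPu))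
    (pow_ne_zero _ (mul_ne_zero hKv hPv)))]
  apply mul_right_cancel₀ hq
  generalize a * b / d = C
  linear_combination (C ^ 6 * q * Ku ^ 12 * Kv ^ 12) * hX - (C ^ 6 * d * Pa ^ 6 * Ps ^ 6) * hK
    - (C ^ 6 * Ku ^ 12 * Kv ^ 12 * e ^ 6 * Pa ^ 6 * Ps ^ 6) * hdd

/-- Lemma 2.1: for `u, v ∈ (ℚ∖ℤ)²` with `u ≢ ±v (mod ℤ²)`,
`(f_u(τ) − f_v(τ))⁶ = j(τ)²(j(τ)−1728)³/(2³⁰·3²⁴) · g_{u+v}⁶ g_{u−v}⁶ / (g_u¹² g_v¹²)`. -/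
theorem fricke_sub_pow_six (u v : ℚ × ℚ)
    (hu : ¬IsIntegralRat u.1 ∧ ¬IsIntegralRat u.2)
    (hv : ¬IsIntegralRat v.1 ∧ ¬IsIntegralRat v.2)
    (huv : ¬CongModZ2 u v ∧ ¬CongModZ2 u (-v)) :
    ∀ τ : ℂ, 0 < τ.im →
      (fricke u τ - fricke v τ) ^ 6 =
        jInv τ ^ 2 * (jInv τ - 1728) ^ 3 / (2 ^ 30 * 3 ^ 24) *
          (siegel (u + v) τ ^ 6 * siegel (u - v) τ ^ 6) /
          (siegel u τ ^ 12 * siegel v τ ^ 12) := by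

  intro τ h
  have hz := fs_notMem h u hu.1
  have hw := fs_notMem h v hv.1
  have key := fs_key h hz hw
  have hdisc := fs_disc τ h
  rw [fs_eta] at hdisc
  have hK := fsK_rel u v τ
  have hT := fsT_self_ne_zero h
  have hPu := fsP_ne_zero h hz
  have hPv := fsP_ne_zero h hw
  have hKu := fsK_ne_zero u τ
  have hKv := fsK_ne_zero v τ
  have hpi : (2 * Real.pi * Complex.I : ℂ) ≠ 0 := Complex.two_pi_I_ne_zero
  have hpi12 : (2 * Real.pi * Complex.I : ℂ) ^ 12 = (2 * Real.pi) ^ 12 := by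
    rw [mul_pow, show (12 : ℕ) = 4 * 3 by norm_num, pow_mul Complex.I, Complex.I_pow_four]; simp
  have hpi' : (2 * Real.pi : ℂ) ^ 12 ≠ 0 := hpi12 ▸ pow_ne_zero _ hpi
  have hq := ec_ne_zero τ
  have hΔ : disc τ ≠ 0 := by
    rw [hdisc]; exact mul_ne_zero hpi' (mul_ne_zero hq (pow_ne_zero _ hT))
  have hj : jInv τ - 1728 = 1728 * 27 * g3 τ ^ 2 / disc τ := by
    rw [jInv]
    field_simp
    rw [disc]; ring
  rw [hj, jInv, fricke, fricke, fs_siegel h, fs_siegel h, fs_siegel h, fs_siegel h,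
    fs_wp τ h, fs_wp τ h]
  have ea : (((u + v).1 : ℚ) : ℂ) * τ + (((u + v).2 : ℚ) : ℂ)
      = ((u.1 : ℂ) * τ + (u.2 : ℂ)) + ((v.1 : ℂ) * τ + (v.2 : ℂ)) := by
    simp only [Prod.fst_add, Prod.snd_add]; push_cast; ring
  have es : (((u - v).1 : ℚ) : ℂ) * τ + (((u - v).2 : ℚ) : ℂ)
      = ((u.1 : ℂ) * τ + (u.2 : ℂ)) - ((v.1 : ℂ) * τ + (v.2 : ℂ)) := by
    simp only [Prod.fst_sub, Prod.snd_sub]; push_cast; ring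
  rw [ea, es]
  rw [fsF, fsP_neg h, fsP_deriv h] at key
  set z := (u.1 : ℂ) * τ + (u.2 : ℂ)
  set w := (v.1 : ℂ) * τ + (v.2 : ℂ)
  have hew := ec_neg w
  have hew0 := ec_ne_zero w
  rw [hew] at key
  rw [← mul_sub]
  generalize (fsL τ h).weierstrassP z - (fsL τ h).weierstrassP w = X at *
  have hX : X ^ 6 * (fsP τ w ^ 12 * fsP τ z ^ 12) =
      (2 * Real.pi) ^ 12 * fsT (ec τ) (ec τ) ^ 24 * ec w ^ 6 *
        (fsP τ (z + w) ^ 6 * fsP τ (z - w) ^ 6) := by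
    have h1 : X * (fsP τ w ^ 2 * fsP τ z ^ 2) =
        -((2 * Real.pi * Complex.I) ^ 2 * fsT (ec τ) (ec τ) ^ 4 * ec w *
          (fsP τ (z + w) * fsP τ (z - w))) := by
      have h2 : fsP τ (z + w) * fsP τ (z - w) = fsP τ w * (-(ec w)⁻¹ * fsP τ w) /
        (-(2 * Real.pi * Complex.I) * fsT (ec τ) (ec τ) ^ 2) ^ 2 * X * fsP τ z ^ 2 := by
        rw [← key]; field_simp
      rw [h2]
      generalize (2 * Real.pi * Complex.I : ℂ) = p at *
      field_simp
    rw [← hpi12]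
    have h6 := congrArg (fun t => t ^ 6) h1
    linear_combination h6
  exact fs_final _ _ _ _ _ _ _ _ _ _ _ _ _ _ _ _ hΔ hq hKu hKv hPu hPv hdisc hK hX
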